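/- arXiv:2412.18802 — 3 statements merged into one kernel-verified Lean document; each statement's English description precedes it below -/
import Mathlib

section
/- Let H be a real inner product space, let l, l' be natural numbers with 1 ≤ l' ≤ l, and let r₁, …, r_l ∈ H and a₁, …, a_l ∈ ℝ. Assume the Slater condition: there exists ū ∈ H with ⟨ū, r_i⟩ < a_i for 1 ≤ i ≤ l' and ⟨ū, r_i⟩ = a_i for l' < i ≤ l. Assume moreover that the family (r_i)_{l' < i ≤ l} is linearly independent in H. If μ ∈ ℝ^l satisfies μ_i ≥ 0 for 1 ≤ i ≤ l' and ∑_{i=1}^{l} μ_i (⟨u, r_i⟩ − a_i) ≥ 0 for every u ∈ H, then μ = 0. -/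
open RealInnerProductSpace

/-!
An affine function that is bounded below is constant, so `∑ i, μ i • r i = 0`. At a Slater point
`ubar` every term `μ i * (⟪ubar, r i⟫ - a i)` is nonpositive while their sum is nonnegative. Hence
each term is zero, and strict feasibility forces `μ i = 0` on the inequality indices. What remains
of `∑ i, μ i • r i = 0` is a linear relation among the independent equality vectors.
-/

theorem eq_zero_of_sum_mul_nonneg_of_neg {ι R : Type*} [Fintype ι]
    [Ring R] [LinearOrder R] [IsStrictOrderedRing R] {s : Set ι} {μ c : ι → R}
    (hμ : ∀ i ∉ s, 0 ≤ μ i) (hc_neg : ∀ i ∉ s, c i < 0) (hc_zero : ∀ i ∈ s, c i = 0)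
    (hsum : 0 ≤ ∑ i, μ i * c i) : ∀ i ∉ s, μ i = 0 := by
  have hterm : ∀ i ∈ Finset.univ, μ i * c i ≤ 0 := by
    intro i _
    by_cases hi : i ∈ s
    · rw [hc_zero i hi, mul_zero]
    · exact mul_nonpos_of_nonneg_of_nonpos (hμ i hi) (hc_neg i hi).le
  have hterm_eq : ∀ i ∈ Finset.univ, μ i * c i = 0 :=
    (Finset.sum_eq_zero_iff_of_nonpos hterm).1 ((Finset.sum_nonpos hterm).antisymm hsum)
  intro i hi
  exact (mul_eq_zero.1 (hterm_eq i (Finset.mem_univ i))).resolve_right (hc_neg i hi).ne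

theorem eq_zero_of_linearIndepOn_of_sum_smul_eq_zero {ι R M : Type*} [Fintype ι]
    [Ring R] [AddCommGroup M] [Module R M] {v : ι → M} {s : Set ι} (hv : LinearIndepOn R v s)
    {μ : ι → R} (hμ : ∀ i ∉ s, μ i = 0) (hsum : ∑ i, μ i • v i = 0) : μ = 0 := by
  classical
  have hsum_s : ∑ i with i ∈ s, μ i • v i = 0 := by
    rw [← hsum, Finset.sum_filter_of_ne]
    intro i _ hne
    by_contra hi
    exact hne (by rw [hμ i hi, zero_smul])
  funext i
  by_cases hi : i ∈ s
  · exact linearIndepOn_iff'.1 hv _ μ (by simp) hsum_s i (by simpa using hi)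
  · exact hμ i hi

section LinearFunctionals

variable {K V : Type*} [Field K] [LinearOrder K] [IsStrictOrderedRing K]
  [AddCommGroup V] [Module K V]

theorem linearMap_eq_zero_of_bddBelow_range {f : V →ₗ[K] K} (hf : BddBelow (Set.range f)) :
    f = 0 := by
  by_contra hne
  rw [(LinearMap.surjective_iff_ne_zero.2 hne).range_eq] at hf
  exact not_bddBelow_univ hf

variable {ι : Type*} [Fintype ι] {f : ι → Module.Dual K V} {a μ : ι → K}

theorem sum_smul_eq_zero_of_forall_sum_mul_sub_nonneg
    (h : ∀ u, 0 ≤ ∑ i, μ i * (f i u - a i)) : ∑ i, μ i • f i = 0 := by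
  refine linearMap_eq_zero_of_bddBelow_range ⟨∑ i, μ i * a i, ?_⟩
  rintro _ ⟨u, rfl⟩
  simpa [mul_sub] using h u

theorem stmt_7_general {s : Set ι}
    (slater : ∃ ubar : V, (∀ i ∉ s, f i ubar < a i) ∧ ∀ i ∈ s, f i ubar = a i)
    (hli : LinearIndepOn K f s) (hμpos : ∀ i ∉ s, 0 ≤ μ i)
    (hμ : ∀ u, 0 ≤ ∑ i, μ i * (f i u - a i)) : μ = 0 := by
  obtain ⟨ubar, hlt, heq⟩ := slater
  have hμ_zero : ∀ i ∉ s, μ i = 0 :=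
    eq_zero_of_sum_mul_nonneg_of_neg hμpos (fun i hi ↦ sub_neg.2 (hlt i hi))
      (fun i hi ↦ sub_eq_zero.2 (heq i hi)) (hμ ubar)
  exact eq_zero_of_linearIndepOn_of_sum_smul_eq_zero hli hμ_zero
    (sum_smul_eq_zero_of_forall_sum_mul_sub_nonneg hμ)

end LinearFunctionals

theorem ker_flip_innerₗ (H : Type*) [NormedAddCommGroup H] [InnerProductSpace ℝ H] :
    (innerₗ H).flip.ker = ⊥ :=
  LinearMap.ker_eq_bot'.2 fun v hv ↦ inner_self_eq_zero.1 (LinearMap.congr_fun hv v)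

/-- Normality step inside Theorem 4.4: under the Slater condition (H4) and
linear independence of the equality-constraint vectors (Remark 4.2), any
multiplier `μ` with `μ_i ≥ 0` on the inequality indices whose Lagrangian term
`∑ i, μ i (⟪u, r i⟫ − a i)` is nonnegative for every `u` must vanish. -/
theorem stmt_7 {H : Type*} [NormedAddCommGroup H] [InnerProductSpace ℝ H]
    (l l' : ℕ) (hl'1 : 1 ≤ l') (hl' : l' ≤ l)
    (r : Fin l → H) (a : Fin l → ℝ)
    (slater : ∃ ubar : H, (∀ i : Fin l, (i : ℕ) < l' → ⟪ubar, r i⟫ < a i) ∧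
      ∀ i : Fin l, l' ≤ (i : ℕ) → ⟪ubar, r i⟫ = a i)
    (hli : LinearIndependent ℝ (fun i : {i : Fin l // l' ≤ (i : ℕ)} => r i))
    (μ : Fin l → ℝ)
    (hμpos : ∀ i : Fin l, (i : ℕ) < l' → 0 ≤ μ i)
    (hμ : ∀ u : H, 0 ≤ ∑ i : Fin l, μ i * (⟪u, r i⟫ - a i)) :
    μ = 0 := by
  exact stmt_7_general (s := {i | l' ≤ (i : ℕ)}) (f := fun i ↦ (innerₗ H).flip (r i))
    (slater.imp fun _ h ↦ ⟨fun i hi ↦ h.1 i (not_le.1 hi), h.2⟩)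
    (hli.map' _ (ker_flip_innerₗ H)) (fun i hi ↦ hμpos i (not_le.1 hi)) hμ
end

section
/- Let H be a real inner product space, let l, l' be natural numbers with 1 ≤ l' ≤ l, let r₁, …, r_l ∈ H and a₁, …, a_l ∈ ℝ, and let f : H → ℝ be a convex function. Define the feasible set U^ad = {u ∈ H : ⟨u, r_i⟩ ≤ a_i for 1 ≤ i ≤ l' and ⟨u, r_i⟩ = a_i for l' < i ≤ l}. Assume the Slater condition: there exists ū ∈ H with ⟨ū, r_i⟩ < a_i for 1 ≤ i ≤ l' and ⟨ū, r_i⟩ = a_i for l' < i ≤ l; and assume the family (r_i)_{l' < i ≤ l} is linearly independent in H. Suppose û ∈ U^ad minimizes f over U^ad. Then there exists λ̄ ∈ ℝ^l with λ̄_i ≥ 0 for 1 ≤ i ≤ l' such that f(û) ≤ f(u) + 2·∑_{i=1}^{l} λ̄_i (⟨u, r_i⟩ − a_i) for all u ∈ H, and moreover λ̄_i (⟨û, r_i⟩ − a_i) = 0 for every 1 ≤ i ≤ l'. -/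
open RealInnerProductSpace

/-!
By convexity, a linear functional separates the epigraph of `f` from the feasible set: some linear
`φ` satisfies `f û ≤ f u + φ (u - v)` for every `u` and every feasible `v`. Taking `u = û` shows
that `û` maximizes `φ` over the feasible set, which is a polyhedron, so `φ` is nonpositive on
every direction admitted by the constraints active at `û`. Farkas' lemma writes `φ` as a
combination of the active constraint functionals, and its coefficients are the multipliers.
-/

theorem exists_eq_smul_of_ker_le_ker {𝕜 E : Type*} [Field 𝕜] [AddCommGroup E] [Module 𝕜 E]
    {g φ : E →ₗ[𝕜] 𝕜} (h : g.ker ≤ φ.ker) : ∃ t : 𝕜, φ = t • g := by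
  have hφ : φ ∈ Submodule.span 𝕜 (Set.range fun _ : Unit => g) :=
    mem_span_of_iInf_ker_le_ker (by simpa using h)
  simpa [Submodule.mem_span_singleton, eq_comm] using hφ

theorem exists_nonneg_add_sum_smul_eq_sum_insert {R M ι : Type*} [Semiring R] [Preorder R]
    [AddCommMonoid M] [Module R M] [DecidableEq ι] {s : Finset ι} {j : ι} (hj : j ∉ s)
    (g : ι → M) {I : Set ι} {c : ι → R} {t : R} (hc : ∀ i ∈ I, 0 ≤ c i)
    (ht : j ∈ I → 0 ≤ t) :
    ∃ d : ι → R, (∀ i ∈ I, 0 ≤ d i) ∧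
      t • g j + ∑ i ∈ s, c i • g i = ∑ i ∈ insert j s, d i • g i := by
  refine ⟨Function.update c j t, fun i hi => ?_, ?_⟩
  · rcases eq_or_ne i j with rfl | hij
    · simpa using ht hi
    · simpa [hij] using hc i hi
  · rw [Finset.sum_insert hj, Function.update_self]
    exact congrArg (t • g j + ·) <| Finset.sum_congr rfl fun i hi => by
      rw [Function.update_of_ne (ne_of_mem_of_not_mem hi hj)]

section Polyhedron

variable {𝕜 E ι : Type*} [Field 𝕜] [LinearOrder 𝕜] [IsStrictOrderedRing 𝕜]
  [AddCommGroup E] [Module 𝕜 E]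

-- Farkas' lemma. When the claim fails without the constraint `j`, restrict to the kernel of `g j`;
-- the coefficient of `g j` is then read off at a point where the claim without `j` fails.
theorem exists_eq_sum_smul_of_forall_apply_nonpos (s : Finset ι) (I : Set ι)
    (g : ι → E →ₗ[𝕜] 𝕜) (φ : E →ₗ[𝕜] 𝕜)
    (h : ∀ x, (∀ i ∈ s, i ∈ I → g i x ≤ 0) → (∀ i ∈ s, i ∉ I → g i x = 0) → φ x ≤ 0) :
    ∃ c : ι → 𝕜, (∀ i ∈ I, 0 ≤ c i) ∧ φ = ∑ i ∈ s, c i • g i := by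
  classical
  induction s using Finset.induction_on generalizing E with
  | empty =>
    have hφ (x : E) : φ x ≤ 0 := h x (by simp) (by simp)
    refine ⟨0, fun _ _ => le_rfl, LinearMap.ext fun x => le_antisymm (by simpa using hφ x) ?_⟩
    simpa using hφ (-x)
  | insert j s hj ih =>
    simp only [Finset.forall_mem_insert] at h
    suffices ∃ (c : ι → 𝕜) (t : 𝕜), (∀ i ∈ I, 0 ≤ c i) ∧ (j ∈ I → 0 ≤ t) ∧
        φ = t • g j + ∑ i ∈ s, c i • g i by
      obtain ⟨c, t, hc, ht, rfl⟩ := this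
      exact exists_nonneg_add_sum_smul_eq_sum_insert hj g hc ht
    by_cases hs : ∀ x, (∀ i ∈ s, i ∈ I → g i x ≤ 0) → (∀ i ∈ s, i ∉ I → g i x = 0) → φ x ≤ 0
    · obtain ⟨c, hc, hφ⟩ := ih g φ hs
      exact ⟨c, 0, hc, fun _ => le_rfl, by simpa using hφ⟩
    push Not at hs
    obtain ⟨x₀, hle, heq, hφx₀⟩ := hs
    obtain ⟨c, hc, hφ⟩ := ih (fun i => (g i).domRestrict (g j).ker) (φ.domRestrict (g j).ker)
      fun x hx hx' => h x ⟨fun _ => x.2.le, hx⟩ ⟨fun _ => x.2, hx'⟩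
    obtain ⟨t, ht⟩ : ∃ t : 𝕜, φ - ∑ i ∈ s, c i • g i = t • g j :=
      exists_eq_smul_of_ker_le_ker fun x hx => by
        simpa [sub_eq_zero] using LinearMap.congr_fun hφ ⟨x, hx⟩
    refine ⟨c, t, hc, fun hjI => ?_, sub_eq_iff_eq_add.1 ht⟩
    have hjx₀ : 0 < g j x₀ := by
      by_contra! hjx₀
      exact hφx₀.not_ge (h x₀ ⟨fun _ => hjx₀, hle⟩ ⟨fun hjI' => absurd hjI hjI', heq⟩)
    have hsum : ∑ i ∈ s, c i * g i x₀ ≤ 0 := Finset.sum_nonpos fun i hi => by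
      by_cases hiI : i ∈ I
      · exact mul_nonpos_of_nonneg_of_nonpos (hc i hiI) (hle i hi hiI)
      · simp [heq i hi hiI]
    have htx₀ : φ x₀ - ∑ i ∈ s, c i * g i x₀ = t * g j x₀ := by
      simpa using LinearMap.congr_fun ht x₀
    exact nonneg_of_mul_nonneg_left (by linarith) hjx₀

/-- The polyhedron cut out by the inequalities `g i x ≤ a i` for `i ∈ I` and the equalities
`g i x = a i` for `i ∉ I`. -/
def polyhedron (I : Set ι) (g : ι → E →ₗ[𝕜] 𝕜) (a : ι → 𝕜) : Set E :=
  {x | (∀ i ∈ I, g i x ≤ a i) ∧ ∀ i ∉ I, g i x = a i}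

theorem convex_polyhedron (I : Set ι) (g : ι → E →ₗ[𝕜] 𝕜) (a : ι → 𝕜) :
    Convex 𝕜 (polyhedron I g a) := by
  simp only [polyhedron, Set.ofPred_and, Set.ofPred_forall]
  exact (convex_iInter₂ fun i _ => convex_halfSpace_le (g i).isLinear _).inter
    (convex_iInter₂ fun i _ => convex_hyperplane (g i).isLinear _)

theorem exists_pos_add_smul_mem_polyhedron [Finite ι] {I : Set ι} {g : ι → E →ₗ[𝕜] 𝕜}
    {a : ι → 𝕜} {x v : E} (hx : x ∈ polyhedron I g a)
    (hle : ∀ i ∈ I, g i x = a i → g i v ≤ 0) (heq : ∀ i ∉ I, g i v = 0) :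
    ∃ ε > (0 : 𝕜), x + ε • v ∈ polyhedron I g a := by
  have hslack (i : ι) : ∃ δ > 0, ∀ ε, 0 < ε → ε < δ → i ∈ I → g i x + ε * g i v ≤ a i := by
    rcases le_or_gt (g i v) 0 with hv | hv
    · refine ⟨1, one_pos, fun ε hε _ hi => ?_⟩
      linarith [hx.1 i hi, mul_nonpos_of_nonneg_of_nonpos hε.le hv]
    · by_cases hi : i ∈ I
      · have hlt : g i x < a i := (hx.1 i hi).lt_of_ne fun hia => hv.not_ge (hle i hi hia)
        refine ⟨(a i - g i x) / g i v, div_pos (sub_pos.2 hlt) hv, fun ε _ hεδ _ => ?_⟩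
        linarith [(lt_div_iff₀ hv).1 hεδ]
      · exact ⟨1, one_pos, fun _ _ _ hi' => absurd hi' hi⟩
  choose δ hδ hδle using hslack
  obtain ⟨ε, hε, hεδ⟩ := Pi.exists_forall_pos_add_lt hδ
  simp only [zero_add] at hεδ
  refine ⟨ε, hε, fun i hi => ?_, fun i hi => ?_⟩
  · simpa using hδle i ε hε (hεδ i) hi
  · simpa [heq i hi] using hx.2 i hi

theorem exists_multipliers_of_isMaxOn_polyhedron [Fintype ι] {I : Set ι} {g : ι → E →ₗ[𝕜] 𝕜}
    {a : ι → 𝕜} {x : E} (hx : x ∈ polyhedron I g a) {φ : E →ₗ[𝕜] 𝕜}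
    (hmax : IsMaxOn φ (polyhedron I g a) x) :
    ∃ c : ι → 𝕜, (∀ i ∈ I, 0 ≤ c i) ∧ (∀ i, c i * (g i x - a i) = 0) ∧
      φ = ∑ i, c i • g i := by
  classical
  obtain ⟨c, hc, hφ⟩ := exists_eq_sum_smul_of_forall_apply_nonpos
    (Finset.univ.filter fun i => g i x = a i) I g φ fun v hle heq => by
      simp only [Finset.mem_filter_univ] at hle heq
      obtain ⟨ε, hε, hmem⟩ := exists_pos_add_smul_mem_polyhedron hx
        (fun i hi hia => hle i hia hi) fun i hi => heq i (hx.2 i hi) hi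
      have hφε : φ x + ε * φ v ≤ φ x := by simpa using hmax hmem
      exact nonpos_of_mul_nonpos_right (add_le_iff_nonpos_right _ |>.1 hφε) hε
  refine ⟨fun i => if g i x = a i then c i else 0, fun i hi => ?_, fun i => ?_, ?_⟩
  · dsimp only
    split_ifs
    exacts [hc i hi, le_rfl]
  · dsimp only
    split_ifs with hia
    exacts [by rw [hia, sub_self, mul_zero], zero_mul _]
  · simpa [Finset.sum_filter, ite_smul] using hφ

end Polyhedron

section Lagrange

variable {E : Type*} [AddCommGroup E] [Module ℝ E] {f : E → ℝ} {x : E}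

-- Riesz extension of `(0, t) ↦ t`, relative to the cone generated by `S`.
theorem exists_linearMap_forall_mem_nonneg {S : Set (E × ℝ)} (hS : Convex ℝ S) (hS0 : 0 ∈ S)
    (hvert : ∀ t, ((0 : E), t) ∈ S → 0 ≤ t) (hproj : ∀ v, ∃ t, (v, t) ∈ S) :
    ∃ φ : E →ₗ[ℝ] ℝ, ∀ p ∈ S, 0 ≤ φ p.1 + p.2 := by
  let K : PointedCone ℝ (E × ℝ) := (ConvexCone.hull ℝ S).toPointedCone (ConvexCone.subset_hull hS0)
  have hSK : S ⊆ K := ConvexCone.subset_hull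
  let height : E × ℝ →ₗ.[ℝ] ℝ :=
    ⟨(⊥ : Submodule ℝ E).prod ⊤, LinearMap.snd ℝ E ℝ ∘ₗ Submodule.subtype _⟩
  have height_nonneg : ∀ p : height.domain, (p : E × ℝ) ∈ K → 0 ≤ height p := by
    rintro ⟨p, hp, _⟩ hpK
    obtain ⟨c, hc, ⟨v, t⟩, hvt, rfl⟩ := (ConvexCone.mem_hull_of_convex hS).1 hpK
    obtain rfl : v = 0 := (smul_eq_zero_iff_right hc.ne').1 hp
    exact mul_nonneg hc.le (hvert t hvt)
  have height_dense : ∀ p : E × ℝ, ∃ q : height.domain, (q : E × ℝ) + p ∈ K := by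
    rintro ⟨v, s⟩
    obtain ⟨t, hvt⟩ := hproj v
    exact ⟨⟨(0, t - s), rfl, trivial⟩, by simpa using hSK hvt⟩
  obtain ⟨Φ, hΦ, hΦK⟩ := riesz_extension K height height_nonneg height_dense
  refine ⟨Φ ∘ₗ LinearMap.inl ℝ E ℝ, fun ⟨v, t⟩ hvt => ?_⟩
  calc 0 ≤ Φ (v, t) := hΦK _ (hSK hvt)
    _ = Φ (v, 0) + Φ (0, t) := by rw [← map_add, Prod.mk_add_mk, add_zero, zero_add]
    _ = Φ (v, 0) + t := congrArg (Φ (v, 0) + ·) (hΦ ⟨(0, t), rfl, trivial⟩)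

open scoped Pointwise in
theorem exists_linearMap_le_add_of_isMinOn (hf : ConvexOn ℝ Set.univ f) {C : Set E}
    (hC : Convex ℝ C) (hx : x ∈ C) (hmin : IsMinOn f C x) :
    ∃ φ : E →ₗ[ℝ] ℝ, ∀ u, ∀ v ∈ C, f x ≤ f u + φ (u - v) := by
  let S : Set (E × ℝ) := {p : E × ℝ | p.1 ∈ Set.univ ∧ f p.1 ≤ p.2} - C ×ˢ {f x}
  have hS : Convex ℝ S := hf.convex_epigraph.sub (hC.prod (convex_singleton _))
  have mem_S (u : E) {v : E} (hv : v ∈ C) : (u - v, f u - f x) ∈ S :=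
    Set.sub_mem_sub (a := (u, f u)) (b := (v, f x)) ⟨Set.mem_univ u, le_rfl⟩ ⟨hv, rfl⟩
  have hvert (t : ℝ) (ht : ((0 : E), t) ∈ S) : 0 ≤ t := by
    obtain ⟨⟨u, s⟩, ⟨-, hus⟩, ⟨v, _⟩, ⟨hv, rfl⟩, hsub⟩ := ht
    obtain ⟨huv, rfl⟩ := Prod.mk.inj hsub
    obtain rfl : u = v := sub_eq_zero.1 huv
    exact sub_nonneg.2 ((hmin hv).trans hus)
  obtain ⟨φ, hφ⟩ := exists_linearMap_forall_mem_nonneg hS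
    (by simpa only [sub_self, Prod.mk_zero_zero] using mem_S x hx) hvert
    fun v => ⟨_, by simpa only [add_sub_cancel_right] using mem_S (v + x) hx⟩
  refine ⟨φ, fun u v hv => ?_⟩
  linarith [hφ _ (mem_S u hv)]

theorem stmt_8_general {ι : Type*} [Fintype ι] {I : Set ι} {g : ι → E →ₗ[ℝ] ℝ} {a : ι → ℝ}
    (hf : ConvexOn ℝ Set.univ f) (hx : x ∈ polyhedron I g a)
    (hmin : IsMinOn f (polyhedron I g a) x) :
    ∃ c : ι → ℝ, (∀ i ∈ I, 0 ≤ c i) ∧ (∀ u, f x ≤ f u + ∑ i, c i * (g i u - a i)) ∧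
      ∀ i, c i * (g i x - a i) = 0 := by
  obtain ⟨φ, hφ⟩ := exists_linearMap_le_add_of_isMinOn hf (convex_polyhedron I g a) hx hmin
  have hmax : IsMaxOn φ (polyhedron I g a) x := fun v hv => by simpa using hφ x v hv
  obtain ⟨c, hc, hslack, rfl⟩ := exists_multipliers_of_isMaxOn_polyhedron hx hmax
  refine ⟨c, hc, fun u => ?_, hslack⟩
  have hφu : (∑ i, c i • g i) (u - x) = ∑ i, c i * (g i u - a i) := by
    simp only [LinearMap.sum_apply, LinearMap.smul_apply, map_sub, smul_eq_mul]
    rw [← Finset.sum_sub_distrib]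
    exact Finset.sum_congr rfl fun i _ => by linear_combination -hslack i
  exact hφu ▸ hφ u x hx

end Lagrange

/-- Lagrange-multiplier existence (convex-separation argument in the proof of
Theorem 4.4): if a convex `f` is minimized over the affine-constrained set
`U^ad` at `uhat`, the Slater condition holds and the equality-constraint
vectors are linearly independent, then there is a multiplier `λ̄` with
`λ̄_i ≥ 0` on inequality indices such that
`f uhat ≤ f u + 2 ∑ i, λ̄ i (⟪u, r i⟫ − a i)` for all `u`, and complementary
slackness `λ̄_i (⟪uhat, r i⟫ − a i) = 0` holds on inequality indices. -/
theorem stmt_8 {H : Type*} [NormedAddCommGroup H] [InnerProductSpace ℝ H]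
    (l l' : ℕ) (hl'1 : 1 ≤ l') (hl' : l' ≤ l)
    (r : Fin l → H) (a : Fin l → ℝ)
    (f : H → ℝ) (hfconv : ConvexOn ℝ Set.univ f)
    (Uad : Set H)
    (hUad : Uad = {u : H | (∀ i : Fin l, (i : ℕ) < l' → ⟪u, r i⟫ ≤ a i) ∧
      ∀ i : Fin l, l' ≤ (i : ℕ) → ⟪u, r i⟫ = a i})
    (slater : ∃ ubar : H, (∀ i : Fin l, (i : ℕ) < l' → ⟪ubar, r i⟫ < a i) ∧
      ∀ i : Fin l, l' ≤ (i : ℕ) → ⟪ubar, r i⟫ = a i)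
    (hli : LinearIndependent ℝ (fun i : {i : Fin l // l' ≤ (i : ℕ)} => r i))
    (uhat : H) (huhat : uhat ∈ Uad) (hmin : ∀ u ∈ Uad, f uhat ≤ f u) :
    ∃ lambar : Fin l → ℝ,
      (∀ i : Fin l, (i : ℕ) < l' → 0 ≤ lambar i) ∧
      (∀ u : H, f uhat ≤ f u + 2 * ∑ i : Fin l, lambar i * (⟪u, r i⟫ - a i)) ∧
      (∀ i : Fin l, (i : ℕ) < l' → lambar i * (⟪uhat, r i⟫ - a i) = 0) := by
  have hpoly : Uad = polyhedron {i : Fin l | (i : ℕ) < l'} (fun i => (innerₗ H).flip (r i)) a := by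
    simp only [hUad, polyhedron, Set.mem_ofPred_eq, not_lt]
    rfl
  subst hpoly
  obtain ⟨c, hc, hle, hslack⟩ := stmt_8_general hfconv huhat hmin
  refine ⟨fun i => c i / 2, fun i hi => div_nonneg (hc i hi) zero_le_two,
    fun u => (hle u).trans_eq ?_, fun i _ => ?_⟩
  · rw [Finset.mul_sum]
    exact congrArg (f u + ·) (Finset.sum_congr rfl fun i _ => by
      simp [real_inner_comm]; ring)
  · simpa [real_inner_comm] using hslack i
end

section
/- Let H be a real Hilbert space, let l, l' be natural numbers with 1 ≤ l' ≤ l, let r₁, …, r_l ∈ H and a₁, …, a_l ∈ ℝ, let B : H × H → ℝ be a continuous symmetric bilinear form for which there exists ε > 0 with B(v, v) ≥ ε‖v‖² for all v ∈ H, let ℓ : H → ℝ be a continuous linear functional and c ∈ ℝ, and define f(u) = B(u, u) + ℓ(u) + c. Define the feasible set U^ad = {u ∈ H : ⟨u, r_i⟩ ≤ a_i for 1 ≤ i ≤ l' and ⟨u, r_i⟩ = a_i for l' < i ≤ l}, the dual cone U₀ = {λ ∈ ℝ^l : λ_i ≥ 0 for 1 ≤ i ≤ l'}, and the Lagrangian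 dual function g(λ) = inf over u ∈ H of [f(u) + 2·∑_{i=1}^{l} λ_i (⟨u, r_i⟩ − a_i)]. Assume the Slater condition: there exists ū ∈ H with ⟨ū, r_i⟩ < a_i for 1 ≤ i ≤ l' and ⟨ū, r_i⟩ = a_i for l' < i ≤ l; and assume the family (r_i)_{l' < i ≤ l} is linearly independent. Then f attains its infimum over U^ad at some û ∈ U^ad, g attains its supremum over U₀ at some λ* ∈ U₀, and strong duality holds: f(û) = g(λ*) = max over λ ∈ U₀ of g(λ) = min over u ∈ U^ad of f(u). -/
open RealInnerProductSpace

/-!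
A minimiser `p` of `f` over the feasible polyhedron satisfies the variational inequality
`0 ≤ f' (u - p)` for feasible `u`, so the affine function `u ↦ f' (u - p)` is nonnegative on the
polyhedron. Farkas' lemma in affine form then provides multipliers `lam` with
`0 ≤ f' (u - p) + ∑ i, lam i * h i u` for all `u`, feasible or not. Adding the gradient inequality
`f p + f' (u - p) ≤ f u` gives `f p ≤ L(u, lam)` for all `u`, which is strong duality. The
minimiser exists because a coercive quadratic functional is strongly convex, so that its minimising
sequences are Cauchy.
-/

open Filter Set Topology

section Farkas

variable {𝕜 M V ι : Type*} [Field 𝕜] [LinearOrder 𝕜] [IsStrictOrderedRing 𝕜]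
  [AddCommGroup M] [Module 𝕜 M] [AddCommGroup V] [Module 𝕜 V]

theorem exists_mem_hull_eq_of_nonneg_on_dual {S : Set M} (hS : S.Finite)
    (p : M →ₗ[𝕜] Module.Dual 𝕜 V) (b : Module.Dual 𝕜 V)
    (hb : ∀ x ∈ PointedCone.dual p S, 0 ≤ b x) :
    ∃ y ∈ PointedCone.hull 𝕜 S, p y = b := by
  induction S, hS using Set.Finite.induction_on generalizing p b with
  | empty =>
    refine ⟨0, zero_mem _, LinearMap.ext fun x => ?_⟩
    have hx : 0 ≤ b x := hb x (by simp)
    have hnx : 0 ≤ b (-x) := hb (-x) (by simp)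
    rw [map_neg, Left.nonneg_neg_iff] at hnx
    simpa using hx.antisymm hnx
  | @insert m S _ _ ih =>
    by_cases hbS : ∀ x ∈ PointedCone.dual p S, 0 ≤ b x
    · obtain ⟨y, hy, hpy⟩ := ih p b hbS
      exact ⟨y, Submodule.span_mono (subset_insert m S) hy, hpy⟩
    push Not at hbS
    obtain ⟨x₀, hx₀, hbx₀⟩ := hbS
    have hmx₀ : p m x₀ < 0 := by
      by_contra! hm
      refine hbx₀.not_ge (hb x₀ ?_)
      rintro _ (rfl | hk)
      exacts [hm, hx₀ hk]
    -- `Q` is the projection along `x₀` onto the kernel of `p m`.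
    let Q : V →ₗ[𝕜] V := LinearMap.id - (p m).smulRight ((p m x₀)⁻¹ • x₀)
    have hQ (φ : Module.Dual 𝕜 V) (x : V) : φ (Q x) = φ x - p m x * ((p m x₀)⁻¹ * φ x₀) := by
      simp [Q]
    obtain ⟨y, hy, hpy⟩ := ih (Q.lcomp 𝕜 𝕜 ∘ₗ p) (b ∘ₗ Q) fun x hx => by
      refine hb (Q x) ?_
      rintro _ (rfl | hk)
      · simp [hQ, hmx₀.ne]
      · exact hx hk
    have hyx₀ : 0 ≤ p y x₀ := by
      rw [← PointedCone.dual_hull] at hx₀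
      exact hx₀ hy
    have hcoeff : 0 ≤ (b x₀ - p y x₀) / p m x₀ :=
      div_nonneg_of_nonpos (by linarith) hmx₀.le
    refine ⟨((b x₀ - p y x₀) / p m x₀) • m + y,
      add_mem (PointedCone.smul_mem _ hcoeff (PointedCone.subset_hull (mem_insert m S)))
        (Submodule.span_mono (subset_insert m S) hy), LinearMap.ext fun x => ?_⟩
    have hpyx : p y (Q x) = b (Q x) := LinearMap.congr_fun hpy x
    rw [hQ, hQ] at hpyx
    simp only [map_add, map_smul, LinearMap.add_apply, LinearMap.smul_apply, smul_eq_mul]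
    linear_combination hpyx

/-- The dual cone `U₀` of multipliers: nonnegative at the indices in `I`, which label the
inequality constraints, and of arbitrary sign at the other indices, which label the equality
constraints. -/
def multiplierCone (𝕜 : Type*) [Field 𝕜] [LinearOrder 𝕜] [IsStrictOrderedRing 𝕜]
    {ι : Type*} (I : Set ι) : PointedCone 𝕜 (ι → 𝕜) :=
  Submodule.pi I fun _ => PointedCone.positive 𝕜 𝕜

@[simp]
theorem mem_multiplierCone {I : Set ι} {lam : ι → 𝕜} :
    lam ∈ multiplierCone 𝕜 I ↔ ∀ i ∈ I, 0 ≤ lam i :=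
  Submodule.mem_pi

theorem exists_mem_multiplierCone_sum_smul_eq [Fintype ι] {I : Set ι}
    (φ : ι → Module.Dual 𝕜 V) (b : Module.Dual 𝕜 V)
    (hb : ∀ x, (∀ i ∈ I, 0 ≤ φ i x) → (∀ i ∉ I, φ i x = 0) → 0 ≤ b x) :
    ∃ lam ∈ multiplierCone 𝕜 I, ∑ i, lam i • φ i = b := by
  classical
  let e : ι → ι → 𝕜 := fun i => Pi.single i 1
  let S : Set (ι → 𝕜) := range e ∪ (-e) '' Iᶜ
  have hS : S.Finite := (finite_range e).union (toFinite _)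
  have hull_le : PointedCone.hull 𝕜 S ≤ multiplierCone 𝕜 I := by
    refine Submodule.span_le.2 ?_
    rintro _ (⟨i, rfl⟩ | ⟨i, hi, rfl⟩)
    · exact mem_multiplierCone.2 fun j _ => by
        simp only [e, Pi.single_apply]; split_ifs <;> simp
    · exact mem_multiplierCone.2 fun j hj => by
        simp [e, ne_of_mem_of_not_mem hj hi]
  have hpe (i : ι) : Fintype.linearCombination 𝕜 φ (e i) = φ i := by
    simp [e]
  obtain ⟨lam, hlam, hsum⟩ := exists_mem_hull_eq_of_nonneg_on_dual hS
    (Fintype.linearCombination 𝕜 φ) b fun x hx => by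
      have hφ (i : ι) : 0 ≤ φ i x := by
        simpa [hpe] using hx (Or.inl (mem_range_self i))
      refine hb x (fun i _ => hφ i) fun i hi => le_antisymm ?_ (hφ i)
      simpa [hpe] using hx (Or.inr (mem_image_of_mem _ hi))
  exact ⟨lam, hull_le hlam, hsum⟩

end Farkas

section Homogenization

variable {𝕜 V : Type*} [Field 𝕜] [AddCommGroup V] [Module 𝕜 V]

/-- The linear functional `(x, t) ↦ h.linear x + t * h 0` on `V × 𝕜` that extends the affine
function `h` on `V`, identified with `V × {1}`. -/
def homogenization (h : V →ᵃ[𝕜] 𝕜) : Module.Dual 𝕜 (V × 𝕜) :=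
  h.linear.coprod (LinearMap.toSpanSingleton 𝕜 𝕜 (h 0))

theorem homogenization_smul (h : V →ᵃ[𝕜] 𝕜) (u : V) (t : 𝕜) :
    homogenization h (t • u, t) = t * h u := by
  simp [homogenization, h.decomp', mul_sub]

end Homogenization

section Lagrangian

variable {𝕜 V ι : Type*} [Field 𝕜] [LinearOrder 𝕜] [IsStrictOrderedRing 𝕜]

/-- The feasible set `U^ad` of the constraints `h i u ≤ 0` for `i ∈ I` and `h i u = 0` for
`i ∉ I`. -/
def feasibleSet (h : ι → V → 𝕜) (I : Set ι) : Set V :=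
  {u | (∀ i ∈ I, h i u ≤ 0) ∧ ∀ i ∉ I, h i u = 0}

/-- The Lagrangian of the problem of minimising `f` under the constraints `h`. -/
def lagrangian [Fintype ι] (f : V → 𝕜) (h : ι → V → 𝕜) (lam : ι → 𝕜) (u : V) : 𝕜 :=
  f u + ∑ i, lam i * h i u

theorem lagrangian_le [Fintype ι] (f : V → 𝕜) {h : ι → V → 𝕜} {I : Set ι} {lam : ι → 𝕜} {u : V}
    (hlam : lam ∈ multiplierCone 𝕜 I) (hu : u ∈ feasibleSet h I) : lagrangian f h lam u ≤ f u := by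
  refine add_le_of_nonpos_right (Finset.sum_nonpos fun i _ => ?_)
  by_cases hi : i ∈ I
  · exact mul_nonpos_of_nonneg_of_nonpos (mem_multiplierCone.1 hlam i hi) (hu.1 i hi)
  · simp [hu.2 i hi]

/-- The Lagrangian dual function. It is valued in `EReal` because the Lagrangian need not be
bounded below. -/
noncomputable def dualFunction [Fintype ι] (f : V → ℝ) (h : ι → V → ℝ) (lam : ι → ℝ) : EReal :=
  ⨅ u, ((lagrangian f h lam u : ℝ) : EReal)

theorem dualFunction_le [Fintype ι] (f : V → ℝ) {h : ι → V → ℝ} {I : Set ι} {lam : ι → ℝ} {u : V}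
    (hlam : lam ∈ multiplierCone ℝ I) (hu : u ∈ feasibleSet h I) : dualFunction f h lam ≤ f u :=
  (iInf_le _ u).trans (EReal.coe_le_coe_iff.2 (lagrangian_le f hlam hu))

theorem isClosed_feasibleSet {X : Type*} [TopologicalSpace X] {h : ι → X → ℝ}
    (hh : ∀ i, Continuous (h i)) (I : Set ι) : IsClosed (feasibleSet h I) := by
  simp only [feasibleSet, ofPred_and, ofPred_forall]
  exact (isClosed_biInter fun i _ => isClosed_le (hh i) continuous_const).inter
    (isClosed_biInter fun i _ => isClosed_eq (hh i) continuous_const)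

variable [AddCommGroup V] [Module 𝕜 V]

theorem convex_feasibleSet (h : ι → V →ᵃ[𝕜] 𝕜) (I : Set ι) :
    Convex 𝕜 (feasibleSet (fun i => h i) I) := by
  simp only [feasibleSet, ofPred_and, ofPred_forall]
  exact (convex_iInter₂ fun i _ => (convex_Iic 0).affine_preimage (h i)).inter
    (convex_iInter₂ fun i _ => (convex_singleton 0).affine_preimage (h i))

theorem homogenization_nonneg_of_pos {h : ι → V →ᵃ[𝕜] 𝕜} {I : Set ι} {b : V →ᵃ[𝕜] 𝕜}
    (hb : ∀ u ∈ feasibleSet (fun i => h i) I, 0 ≤ b u) {x : V} {t : 𝕜} (ht : 0 < t)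
    (hle : ∀ i ∈ I, homogenization (h i) (x, t) ≤ 0)
    (heq : ∀ i ∉ I, homogenization (h i) (x, t) = 0) :
    0 ≤ homogenization b (x, t) := by
  obtain ⟨u, rfl⟩ : ∃ u, t • u = x := ⟨t⁻¹ • x, smul_inv_smul₀ ht.ne' x⟩
  simp only [homogenization_smul] at hle heq ⊢
  refine mul_nonneg ht.le (hb u ⟨fun i hi => ?_, fun i hi => ?_⟩)
  · exact nonpos_of_mul_nonpos_right (hle i hi) ht
  · exact (mul_eq_zero.1 (heq i hi)).resolve_left ht.ne'

theorem homogenization_nonneg {h : ι → V →ᵃ[𝕜] 𝕜} {I : Set ι} {b : V →ᵃ[𝕜] 𝕜}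
    (hne : (feasibleSet (fun i => h i) I).Nonempty)
    (hb : ∀ u ∈ feasibleSet (fun i => h i) I, 0 ≤ b u) {x : V} {t : 𝕜} (ht : 0 ≤ t)
    (hle : ∀ i ∈ I, homogenization (h i) (x, t) ≤ 0)
    (heq : ∀ i ∉ I, homogenization (h i) (x, t) = 0) :
    0 ≤ homogenization b (x, t) := by
  obtain ⟨p, hp⟩ := hne
  have hom_add (k : V →ᵃ[𝕜] 𝕜) (s : 𝕜) :
      homogenization k (x + s • p, t + s) = homogenization k (x, t) + s * k p := by
    rw [← Prod.mk_add_mk, map_add, homogenization_smul]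
  -- Moving towards the feasible point `p` makes the last coordinate positive.
  have hpos (s : 𝕜) (hs : 0 < s) : 0 ≤ homogenization b (x, t) + s * b p := by
    rw [← hom_add]
    refine homogenization_nonneg_of_pos hb (by positivity) (fun i hi => ?_) fun i hi => ?_
    · rw [hom_add]
      exact add_nonpos (hle i hi) (mul_nonpos_of_nonneg_of_nonpos hs.le (hp.1 i hi))
    · simp [hom_add, heq i hi, show h i p = 0 from hp.2 i hi]
  have hbp : 0 ≤ b p := hb p hp
  by_contra! hneg
  have hlim := hpos (-homogenization b (x, t) / (b p + 1)) (by
    have := neg_pos.2 hneg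
    positivity)
  have : homogenization b (x, t) + -homogenization b (x, t) / (b p + 1) * b p
      = homogenization b (x, t) / (b p + 1) := by
    field_simp
    ring
  rw [this] at hlim
  exact hlim.not_gt (div_neg_of_neg_of_pos hneg (by positivity))

/-- Farkas' lemma in affine form, equivalently strong duality for linear programs. -/
theorem exists_lagrangian_nonneg_of_nonneg_on_feasibleSet [Fintype ι] {h : ι → V →ᵃ[𝕜] 𝕜}
    {I : Set ι} {b : V →ᵃ[𝕜] 𝕜} (hne : (feasibleSet (fun i => h i) I).Nonempty)
    (hb : ∀ u ∈ feasibleSet (fun i => h i) I, 0 ≤ b u) :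
    ∃ lam ∈ multiplierCone 𝕜 I, ∀ u, 0 ≤ lagrangian b (fun i => h i) lam u := by
  let φ : Option ι → Module.Dual 𝕜 (V × 𝕜) :=
    fun o => o.elim (LinearMap.snd 𝕜 V 𝕜) fun i => -homogenization (h i)
  obtain ⟨mu, hmu, hsum⟩ := exists_mem_multiplierCone_sum_smul_eq (I := insert none (some '' I))
    φ (homogenization b) fun ⟨x, t⟩ hle heq =>
      homogenization_nonneg hne hb (hle none (mem_insert _ _))
        (fun i hi => by simpa [φ] using hle (some i) (by simpa using hi))
        (fun i hi => by simpa [φ] using heq (some i) (by simpa using hi))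
  refine ⟨fun i => mu (some i), mem_multiplierCone.2 fun i hi =>
    mem_multiplierCone.1 hmu (some i) (by simpa using hi), fun u => ?_⟩
  have hom_one (k : V →ᵃ[𝕜] 𝕜) : homogenization k (u, 1) = k u := by
    simpa using homogenization_smul k u 1
  have hbu : mu none - ∑ i, mu (some i) * h i u = b u := by
    simpa [φ, Fintype.sum_option, hom_one, sub_eq_add_neg] using LinearMap.congr_fun hsum (u, 1)
  have hnone : 0 ≤ mu none := mem_multiplierCone.1 hmu none (mem_insert _ _)
  rw [lagrangian, ← hbu]
  simpa using hnone

end Lagrangian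

section Convex

variable {E ι : Type*} [NormedAddCommGroup E] [NormedSpace ℝ E]

theorem add_fderiv_sub_le_of_convexOn {f : E → ℝ} {f' : StrongDual ℝ E} {p : E}
    (hf : ConvexOn ℝ univ f) (hf' : HasFDerivAt f f' p) (u : E) : f p + f' (u - p) ≤ f u := by
  have hderiv : HasDerivAt (f ∘ AffineMap.lineMap p u) (f' (u - p)) (0 : ℝ) :=
    HasFDerivAt.comp_hasDerivAt (0 : ℝ) (by simpa using hf') AffineMap.hasDerivAt_lineMap
  have hslope := (hf.comp_affineMap (AffineMap.lineMap p u)).le_slope_of_hasDerivAt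
    (mem_univ 0) (mem_univ 1) zero_lt_one hderiv
  simp only [slope_def_field, Function.comp_apply, AffineMap.lineMap_apply_one,
    AffineMap.lineMap_apply_zero, sub_zero, div_one] at hslope
  linarith

theorem exists_le_lagrangian_of_isMinOn [Fintype ι] {f : E → ℝ} {f' : StrongDual ℝ E} {p : E}
    {h : ι → E →ᵃ[ℝ] ℝ} {I : Set ι} (hf : ConvexOn ℝ univ f) (hf' : HasFDerivAt f f' p)
    (hp : p ∈ feasibleSet (fun i => h i) I) (hmin : IsMinOn f (feasibleSet (fun i => h i) I) p) :
    ∃ lam ∈ multiplierCone ℝ I, ∀ u, f p ≤ lagrangian f (fun i => h i) lam u := by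
  let b : E →ᵃ[ℝ] ℝ := f'.toLinearMap.toAffineMap - AffineMap.const ℝ E (f' p)
  have hb (u : E) : b u = f' (u - p) := by simp [b]
  have variational (u : E) (hu : u ∈ feasibleSet (fun i => h i) I) : 0 ≤ b u := by
    rw [hb]
    exact hmin.localize.hasFDerivWithinAt_nonneg hf'.hasFDerivWithinAt
      (sub_mem_posTangentConeAt_of_segment_subset ((convex_feasibleSet h I).segment_subset hp hu))
  obtain ⟨lam, hlam, hnonneg⟩ :=
    exists_lagrangian_nonneg_of_nonneg_on_feasibleSet ⟨p, hp⟩ variational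
  refine ⟨lam, hlam, fun u => ?_⟩
  have hu := hnonneg u
  have hgrad := add_fderiv_sub_le_of_convexOn hf hf' u
  simp only [lagrangian, hb] at hu ⊢
  linarith

theorem exists_isMinOn_of_strongConvexOn {f : E → ℝ} {s : Set E} {m : ℝ} (hm : 0 < m)
    (hf : StrongConvexOn s m f) (hlsc : LowerSemicontinuousOn f s)
    (hbdd : BddBelow (f '' s)) (hs : IsComplete s) (hne : s.Nonempty) : ∃ p ∈ s, IsMinOn f s p := by
  obtain ⟨b, hbanti, hblim, hbmem⟩ := exists_seq_tendsto_sInf (hne.image f) hbdd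
  choose x hxs hfx using hbmem
  have sInf_le (v : E) (hv : v ∈ s) : sInf (f '' s) ≤ f v := csInf_le hbdd (mem_image_of_mem f hv)
  have sq_le (n k N : ℕ) (hn : N ≤ n) (hk : N ≤ k) :
      ‖x n - x k‖ ^ 2 ≤ 8 / m * (b N - sInf (f '' s)) := by
    have hmid := hf.2 (hxs n) (hxs k) one_half_pos.le one_half_pos.le (add_halves 1)
    have hinf := sInf_le _ (hf.1 (hxs n) (hxs k) one_half_pos.le one_half_pos.le (add_halves 1))
    simp only [hfx, smul_eq_mul] at hmid
    rw [div_mul_eq_mul_div, le_div_iff₀ hm]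
    linarith [hbanti hn, hbanti hk]
  have hcauchy : CauchySeq x := by
    refine cauchySeq_of_le_tendsto_0 (fun N => √(8 / m * (b N - sInf (f '' s)))) ?_ ?_
    · intro n k N hn hk
      rw [dist_eq_norm]
      exact Real.le_sqrt_of_sq_le (sq_le n k N hn hk)
    · simpa using ((hblim.sub_const (sInf (f '' s))).const_mul (8 / m)).sqrt
  obtain ⟨p, hp, hxp⟩ := cauchySeq_tendsto_of_isComplete hs hxs hcauchy
  have hxp' : Tendsto x atTop (𝓝[s] p) := tendsto_nhdsWithin_iff.2 ⟨hxp, .of_forall hxs⟩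
  refine ⟨p, hp, isMinOn_iff.2 fun v hv => (le_of_forall_lt_imp_le_of_dense fun y hy => ?_).trans
    (sInf_le v hv)⟩
  refine ge_of_tendsto hblim ((hxp'.eventually (hlsc p hp y hy)).mono fun n hn => ?_)
  rw [← hfx n]
  exact hn.le

end Convex

section Quadratic

variable {E : Type*} [NormedAddCommGroup E] [NormedSpace ℝ E]

/-- The quadratic cost functional of the problem, with leading part `u ↦ B u u`. -/
noncomputable def quadraticFunctional (B : E →L[ℝ] E →L[ℝ] ℝ) (ℓ : StrongDual ℝ E) (c : ℝ)
    (u : E) : ℝ :=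
  B u u + ℓ u + c

variable (B : E →L[ℝ] E →L[ℝ] ℝ) (ℓ : StrongDual ℝ E) (c : ℝ)

theorem hasFDerivAt_quadraticFunctional (p : E) :
    HasFDerivAt (quadraticFunctional B ℓ c) (B p + B.flip p + ℓ) p := by
  have hB : HasFDerivAt (fun u => B u u) (B p + B.flip p) p := by
    refine (B.hasFDerivAt_of_bilinear (hasFDerivAt_id p) (hasFDerivAt_id p)).congr_fderiv ?_
    ext v
    simp
  exact (hB.add ℓ.hasFDerivAt).add_const c

theorem strongConvexOn_quadraticFunctional {s : Set E} (hs : Convex ℝ s) {C : ℝ}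
    (hC : ∀ u, C * ‖u‖ * ‖u‖ ≤ B u u) : StrongConvexOn s (2 * C) (quadraticFunctional B ℓ c) := by
  refine ⟨hs, fun x _ y _ a b ha hb hab => ?_⟩
  have hgap : a * quadraticFunctional B ℓ c x + b * quadraticFunctional B ℓ c y
      - quadraticFunctional B ℓ c (a • x + b • y) = a * b * B (x - y) (x - y) := by
    obtain rfl : b = 1 - a := by linarith
    simp only [quadraticFunctional, map_add, map_sub, map_smul, add_apply, sub_apply, smul_apply,
      smul_eq_mul]
    ring
  have hcoer := mul_le_mul_of_nonneg_left (hC (x - y)) (mul_nonneg ha hb)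
  simp only [smul_eq_mul]
  linarith

theorem bddBelow_range_quadraticFunctional (hB : IsCoercive B) :
    BddBelow (range (quadraticFunctional B ℓ c)) := by
  obtain ⟨C, hC, hcoer⟩ := hB
  refine ⟨c - ‖ℓ‖ ^ 2 / (4 * C), ?_⟩
  rintro _ ⟨u, rfl⟩
  have hℓ : -(‖ℓ‖ * ‖u‖) ≤ ℓ u := neg_le_of_abs_le (ℓ.le_opNorm u)
  have complete_square : C * ‖u‖ * ‖u‖ - ‖ℓ‖ * ‖u‖ + ‖ℓ‖ ^ 2 / (4 * C)
      = C * (‖u‖ - ‖ℓ‖ / (2 * C)) ^ 2 := by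
    field_simp
    ring
  have hsq : 0 ≤ C * (‖u‖ - ‖ℓ‖ / (2 * C)) ^ 2 := by positivity
  unfold quadraticFunctional
  linarith [hcoer u]

theorem exists_isMinOn_quadraticFunctional (hB : IsCoercive B) {s : Set E} (hs : IsComplete s)
    (hconv : Convex ℝ s) (hne : s.Nonempty) : ∃ p ∈ s, IsMinOn (quadraticFunctional B ℓ c) s p := by
  have hbdd := (bddBelow_range_quadraticFunctional B ℓ c hB).mono (image_subset_range _ s)
  have hcont : Continuous (quadraticFunctional B ℓ c) :=
    continuous_iff_continuousAt.2 fun p => (hasFDerivAt_quadraticFunctional B ℓ c p).continuousAt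
  obtain ⟨C, hC, hcoer⟩ := hB
  exact exists_isMinOn_of_strongConvexOn (mul_pos two_pos hC)
    (strongConvexOn_quadraticFunctional B ℓ c hconv hcoer)
    (hcont.lowerSemicontinuous.lowerSemicontinuousOn s) hbdd hs hne

theorem convexOn_quadraticFunctional {s : Set E} (hs : Convex ℝ s) (hB : ∀ u, 0 ≤ B u u) :
    ConvexOn ℝ s (quadraticFunctional B ℓ c) := by
  simpa using strongConvexOn_quadraticFunctional B ℓ c hs (C := 0) (by simpa using hB)

end Quadratic

theorem stmt_9_general {E ι : Type*} [NormedAddCommGroup E] [NormedSpace ℝ E] [CompleteSpace E]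
    [Fintype ι] (h : ι → E →ᴬ[ℝ] ℝ) (I : Set ι) (B : E →L[ℝ] E →L[ℝ] ℝ) (hB : IsCoercive B)
    (ℓ : StrongDual ℝ E) (c : ℝ) (hne : (feasibleSet (fun i => h i) I).Nonempty) :
    ∃ uhat ∈ feasibleSet (fun i => h i) I, ∃ lamstar ∈ multiplierCone ℝ I,
      IsMinOn (quadraticFunctional B ℓ c) (feasibleSet (fun i => h i) I) uhat ∧
      IsMaxOn (dualFunction (quadraticFunctional B ℓ c) fun i => h i) (multiplierCone ℝ I)
        lamstar ∧
      (quadraticFunctional B ℓ c uhat : EReal) =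
        dualFunction (quadraticFunctional B ℓ c) (fun i => h i) lamstar := by
  have hclosed := isClosed_feasibleSet (fun i => (h i).continuous) I
  have hconv := convex_feasibleSet (fun i => (h i).toAffineMap) I
  obtain ⟨p, hp, hmin⟩ := exists_isMinOn_quadraticFunctional B ℓ c hB hclosed.isComplete hconv hne
  have hBnonneg (u : E) : 0 ≤ B u u := by
    obtain ⟨C, hC, hcoer⟩ := hB
    exact (by positivity : 0 ≤ C * ‖u‖ * ‖u‖).trans (hcoer u)
  obtain ⟨lam, hlam, hle⟩ := exists_le_lagrangian_of_isMinOn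
    (convexOn_quadraticFunctional B ℓ c convex_univ hBnonneg)
    (hasFDerivAt_quadraticFunctional B ℓ c p) hp hmin
  have hge : (quadraticFunctional B ℓ c p : EReal) ≤
      dualFunction (quadraticFunctional B ℓ c) (fun i => h i) lam :=
    le_iInf fun u => EReal.coe_le_coe_iff.2 (hle u)
  exact ⟨p, hp, lam, hlam, hmin, isMaxOn_iff.2 fun mu hmu => (dualFunction_le _ hmu hp).trans hge,
    hge.antisymm (dualFunction_le _ hlam hp)⟩

section InnerConstraint

variable {H ι : Type*} [NormedAddCommGroup H] [InnerProductSpace ℝ H]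

/-- The affine constraint function `u ↦ 2 * (⟪u, r⟫ - a)` of a half-space or hyperplane. The factor
`2` is the one that the paper's Lagrangian puts in front of the multipliers. -/
noncomputable def innerConstraint (r : H) (a : ℝ) : H →ᴬ[ℝ] ℝ :=
  (2 : ℝ) • ((innerSL ℝ r).toContinuousAffineMap - ContinuousAffineMap.const ℝ H a)

theorem innerConstraint_apply (r : H) (a : ℝ) (u : H) :
    innerConstraint r a u = 2 * (⟪u, r⟫ - a) := by
  simp [innerConstraint, real_inner_comm]

theorem feasibleSet_innerConstraint (r : ι → H) (a : ι → ℝ) (I : Set ι) :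
    feasibleSet (fun i => innerConstraint (r i) (a i)) I =
      {u | (∀ i ∈ I, ⟪u, r i⟫ ≤ a i) ∧ ∀ i ∉ I, ⟪u, r i⟫ = a i} := by
  ext u
  simp [feasibleSet, innerConstraint_apply, mul_nonpos_iff, sub_eq_zero, (two_pos (α := ℝ)).not_ge]

theorem dualFunction_innerConstraint [Fintype ι] (f : H → ℝ) (r : ι → H) (a : ι → ℝ)
    (lam : ι → ℝ) :
    dualFunction f (fun i => innerConstraint (r i) (a i)) lam =
      ⨅ u, ((f u + 2 * ∑ i, lam i * (⟪u, r i⟫ - a i) : ℝ) : EReal) := by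
  simp only [dualFunction, lagrangian, innerConstraint_apply, Finset.mul_sum, mul_left_comm]

end InnerConstraint

/-- Strong duality (Theorem 4.4, abstracted): for a coercive continuous
quadratic functional `f u = B u u + ℓ u + c` on a real Hilbert space, affine
constraints satisfying the Slater condition with linearly independent
equality-constraint vectors, the primal problem attains its minimum at some
`uhat ∈ U^ad`, the Lagrangian dual `g` attains its maximum at some
`λ* ∈ U₀`, and `f uhat = g λ*`. -/
theorem stmt_9 {H : Type*} [NormedAddCommGroup H] [InnerProductSpace ℝ H]
    [CompleteSpace H]
    (l l' : ℕ) (hl'1 : 1 ≤ l') (hl' : l' ≤ l)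
    (r : Fin l → H) (a : Fin l → ℝ)
    (B : H →L[ℝ] H →L[ℝ] ℝ)
    (hsymm : ∀ x y : H, B x y = B y x)
    (ε : ℝ) (hε : 0 < ε) (hcoer : ∀ v : H, ε * ‖v‖ ^ 2 ≤ B v v)
    (ℓ : H →L[ℝ] ℝ) (c : ℝ)
    (f : H → ℝ) (hf : ∀ u : H, f u = B u u + ℓ u + c)
    (Uad : Set H)
    (hUad : Uad = {u : H | (∀ i : Fin l, (i : ℕ) < l' → ⟪u, r i⟫ ≤ a i) ∧
      ∀ i : Fin l, l' ≤ (i : ℕ) → ⟪u, r i⟫ = a i})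
    (U₀ : Set (Fin l → ℝ))
    (hU₀ : U₀ = {lam : Fin l → ℝ | ∀ i : Fin l, (i : ℕ) < l' → 0 ≤ lam i})
    (g : (Fin l → ℝ) → EReal)
    (hg : ∀ lam : Fin l → ℝ,
      g lam = ⨅ u : H,
        ((f u + 2 * ∑ i : Fin l, lam i * (⟪u, r i⟫ - a i) : ℝ) : EReal))
    (slater : ∃ ubar : H, (∀ i : Fin l, (i : ℕ) < l' → ⟪ubar, r i⟫ < a i) ∧
      ∀ i : Fin l, l' ≤ (i : ℕ) → ⟪ubar, r i⟫ = a i)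
    (hli : LinearIndependent ℝ (fun i : {i : Fin l // l' ≤ (i : ℕ)} => r i)) :
    ∃ uhat : H, ∃ lamstar : Fin l → ℝ,
      uhat ∈ Uad ∧ lamstar ∈ U₀ ∧
      (∀ u ∈ Uad, f uhat ≤ f u) ∧
      (∀ lam ∈ U₀, g lam ≤ g lamstar) ∧
      ((f uhat : ℝ) : EReal) = g lamstar := by
  obtain rfl : f = quadraticFunctional B ℓ c := funext hf
  obtain rfl : g = dualFunction _ fun i => innerConstraint (r i) (a i) :=
    funext fun lam => (hg lam).trans (dualFunction_innerConstraint _ r a lam).symm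
  subst hUad hU₀
  obtain ⟨ubar, hlt, heq⟩ := slater
  have hB : IsCoercive B := ⟨ε, hε, fun v => by linarith [hcoer v]⟩
  have key := stmt_9_general (fun i => innerConstraint (r i) (a i)) {i | (i : ℕ) < l'} B hB ℓ c
    ⟨ubar, by simpa [feasibleSet_innerConstraint] using ⟨fun i hi => (hlt i hi).le, heq⟩⟩
  simpa [feasibleSet_innerConstraint, isMinOn_iff, isMaxOn_iff] using key
end
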